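/- Let λ ∈ ℂ*, a, b ∈ ℂ, and let W ∈ O_𝔚 be a nontrivial simple 𝔚-module which is not a highest weight module. Then the Virasoro module L(W, λ, a, b) is simple if and only if λ ≠ 1 and b ≠ 1. -/

import Mathlib

/-- A representation of the Witt algebra `𝔚 = span{d_i : i ≥ -1}`, encoded by the family of
operators `d i` (only the indices `i ≥ -1` are relevant) satisfying
`[d_m, d_n] = (n - m) d_{m+n}`. -/
structure WittRep (W : Type*) [AddCommGroup W] [Module ℂ W] where
  d : ℤ → W →ₗ[ℂ] W
  comm : ∀ m n : ℤ, -1 ≤ m → -1 ≤ n →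
    d m ∘ₗ d n - d n ∘ₗ d m = (((n - m : ℤ) : ℂ)) • d (m + n)

namespace WittRep

variable {W : Type*} [AddCommGroup W] [Module ℂ W]

/-- Condition A : the module lies in the category `O_𝔚`. -/
def InO (ρ : WittRep W) : Prop :=
  ∀ v : W, ∃ n : ℕ, ∀ i : ℤ, (n : ℤ) ≤ i → ρ.d i v = 0

/-- The module is trivial: the Lie algebra acts by zero. -/
def IsTrivial (ρ : WittRep W) : Prop := ∀ i : ℤ, -1 ≤ i → ρ.d i = 0

/-- A `𝔚`-submodule. -/
def Invariant (ρ : WittRep W) (U : Submodule ℂ W) : Prop :=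
  ∀ i : ℤ, -1 ≤ i → ∀ u ∈ U, ρ.d i u ∈ U

/-- Simplicity of a `𝔚`-module. -/
def IsSimple (ρ : WittRep W) : Prop :=
  (∃ v : W, v ≠ 0) ∧ ∀ U : Submodule ℂ W, ρ.Invariant U → U = ⊥ ∨ U = ⊤

/-- A `𝔟`-submodule (`𝔟 = span{d_i : i ≥ 0}`). -/
def BInvariant (ρ : WittRep W) (U : Submodule ℂ W) : Prop :=
  ∀ i : ℤ, 0 ≤ i → ∀ u ∈ U, ρ.d i u ∈ U

/-- The socle `Soc_𝔟(W)`: the sum of the minimal nonzero `𝔟`-submodules. -/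
def Soc (ρ : WittRep W) : Submodule ℂ W :=
  sSup {U | ρ.BInvariant U ∧ U ≠ ⊥ ∧
    ∀ U' : Submodule ℂ W, ρ.BInvariant U' → U' ≠ ⊥ → U' ≤ U → U' = U}

/-- `w₀` is a highest weight vector of weight `b'`. -/
def IsHW (ρ : WittRep W) (w₀ : W) (b' : ℂ) : Prop :=
  w₀ ≠ 0 ∧ ρ.d 0 w₀ = b' • w₀ ∧ ∀ i : ℤ, 1 ≤ i → ρ.d i w₀ = 0

/-- `w₀` generates the `𝔚`-module. -/
def Generates (ρ : WittRep W) (w₀ : W) : Prop :=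
  ∀ U : Submodule ℂ W, ρ.Invariant U → w₀ ∈ U → U = ⊤

/-- The operator `e^{kt} d/dt = Σ_{i ≥ 0} (k^i/i!) d_{i-1}` (a finite sum on each vector of a
module in `O_𝔚`). -/
noncomputable def E (ρ : WittRep W) (k : ℤ) (w : W) : W :=
  ∑ᶠ i : ℕ, (((k : ℂ) ^ i) / (Nat.factorial i : ℂ)) • ρ.d ((i : ℤ) - 1) w

/-- The action of `d_k` on `L(W, λ, a, b) = W ⊗ ℂ[t, t⁻¹]`, realized on `ℤ →₀ W`
(`w ⊗ t^j ↦ Finsupp.single j w`):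
`d_k · (w ⊗ t^j) = ((λ^k e^{kt} − 1) d/dt + a + kb + j) w ⊗ t^{k+j}`. -/
noncomputable def Lact (ρ : WittRep W) (lam a b : ℂ) (k : ℤ) (f : ℤ →₀ W) : ℤ →₀ W :=
  f.sum fun j w => Finsupp.single (k + j)
    (lam ^ k • ρ.E k w - ρ.d (-1) w + (a + (k : ℂ) * b + (j : ℂ)) • w)

/-- The PBW map `ℕ →₀ ℂ → W`, `(k, c) ↦ c • d_{-1}^k w₀`. -/
noncomputable def pbwMap (ρ : WittRep W) (w₀ : W) : (ℕ →₀ ℂ) →ₗ[ℂ] W :=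
  Finsupp.lsum ℂ fun k : ℕ => ((ρ.d (-1)) ^ k) ∘ₗ LinearMap.toSpanSingleton ℂ W w₀

/-- `W` is the Verma `𝔚`-module with highest weight vector `w₀` of highest weight `b'`. -/
def IsVerma (ρ : WittRep W) (w₀ : W) (b' : ℂ) : Prop :=
  ρ.d 0 w₀ = b' • w₀ ∧ (∀ i : ℤ, 1 ≤ i → ρ.d i w₀ = 0) ∧
    Function.Bijective (ρ.pbwMap w₀)

/-- `W^{(n)} = Σ_{i=0}^n d_{-1}^i (Soc_𝔟 W)`. -/
noncomputable def Wn (ρ : WittRep W) (n : ℕ) : Submodule ℂ W :=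
  ⨆ i : Fin (n + 1), Submodule.map ((ρ.d (-1)) ^ (i : ℕ)) ρ.Soc

/-- `L₀(a, b') = span{d₁^i · (w₀ ⊗ t^{2j})} ⊆ L(W, -1, a, b' + 1)`. -/
noncomputable def Lzero (ρ : WittRep W) (a b' : ℂ) (w₀ : W) : Submodule ℂ (ℤ →₀ W) :=
  Submodule.span ℂ
    {g | ∃ (i : ℕ) (j : ℤ), g = (ρ.Lact (-1) a (b' + 1) 1)^[i] (Finsupp.single (2 * j) w₀)}

/-- `L₁(a, b') = span{d₁^i · (w₀ ⊗ t^{2j+1})} ⊆ L(W, -1, a, b' + 1)`. -/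
noncomputable def Lone (ρ : WittRep W) (a b' : ℂ) (w₀ : W) : Submodule ℂ (ℤ →₀ W) :=
  Submodule.span ℂ
    {g | ∃ (i : ℕ) (j : ℤ), g = (ρ.Lact (-1) a (b' + 1) 1)^[i] (Finsupp.single (2 * j + 1) w₀)}

end WittRep

/-- A representation of the Lie algebra `𝔟 = span{d_i : i ≥ 0}`. -/
structure BRep (B : Type*) [AddCommGroup B] [Module ℂ B] where
  d : ℕ → B →ₗ[ℂ] B
  comm : ∀ m n : ℕ, d m ∘ₗ d n - d n ∘ₗ d m = (((n : ℂ) - (m : ℂ))) • d (m + n)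

namespace BRep

variable {B : Type*} [AddCommGroup B] [Module ℂ B]

/-- Condition A : the module lies in the category `O_𝔟`. -/
def InO (ρ : BRep B) : Prop := ∀ v : B, ∃ n : ℕ, ∀ i : ℕ, n ≤ i → ρ.d i v = 0

def IsTrivial (ρ : BRep B) : Prop := ∀ i : ℕ, ρ.d i = 0

def IsSimple (ρ : BRep B) : Prop :=
  (∃ v : B, v ≠ 0) ∧
    ∀ U : Submodule ℂ B, (∀ i : ℕ, ∀ u ∈ U, ρ.d i u ∈ U) → U = ⊥ ∨ U = ⊤

/-- The set of `r ∈ ℤ≥0` such that `d_{r+i} v = 0` for all `i ≥ 1`;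
`ord_𝔟(v)` is its least element. -/
def ordSet (ρ : BRep B) (v : B) : Set ℕ := {r : ℕ | ∀ i : ℕ, r + 1 ≤ i → ρ.d i v = 0}

/-- The action of `d_m` on the Virasoro module `N(B_(c), a) = B ⊗ ℂ[t, t⁻¹]`, realized on
`ℤ →₀ B`:  `d_m · (w ⊗ t^j) = (Σ_{i≥1} (m^i/i!) d_{i-1} + mc + a + j) w ⊗ t^{m+j}`
(`c` is the twist of the `d₀`-action; `c = 0` gives `N(B, a)`). -/
noncomputable def Nact (ρ : BRep B) (a c : ℂ) (m : ℤ) (f : ℤ →₀ B) : ℤ →₀ B :=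
  f.sum fun j w => Finsupp.single (m + j)
    ((∑ᶠ i : ℕ, (((m : ℂ) ^ (i + 1)) / (Nat.factorial (i + 1) : ℂ)) • ρ.d i w) +
      ((m : ℂ) * c + a + (j : ℂ)) • w)

end BRep

/-- For a family `U : ℤ → Submodule ℂ W`, the subspace `⊕_j U j ⊗ t^j` of `W ⊗ ℂ[t,t⁻¹]`. -/
def gradedSub {W : Type*} [AddCommGroup W] [Module ℂ W] (U : ℤ → Submodule ℂ W) :
    Submodule ℂ (ℤ →₀ W) where
  carrier := {f | ∀ j, f j ∈ U j}
  add_mem' := fun hf hg j => by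
    simpa only [Finsupp.add_apply] using (U j).add_mem (hf j) (hg j)
  zero_mem' := fun j => by simp
  smul_mem' := fun c f hf j => by
    simpa only [Finsupp.smul_apply] using (U j).smul_mem c (hf j)

/-- A submodule invariant under a (ℤ-indexed) family of operators. -/
def ActInvariant {V : Type*} [AddCommGroup V] [Module ℂ V] (act : ℤ → V → V)
    (M : Submodule ℂ V) : Prop :=
  ∀ k : ℤ, ∀ u ∈ M, act k u ∈ M

/-- Simplicity of the module given by a family of operators (the central element acts by zero). -/
def ActSimple {V : Type*} [AddCommGroup V] [Module ℂ V] (act : ℤ → V → V) : Prop :=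
  (∃ v : V, v ≠ 0) ∧ ∀ M : Submodule ℂ V, ActInvariant act M → M = ⊥ ∨ M = ⊤

/-- A representation of the Virasoro algebra. -/
structure VirasoroRep (V : Type*) [AddCommGroup V] [Module ℂ V] where
  d : ℤ → V →ₗ[ℂ] V
  z : V →ₗ[ℂ] V
  comm : ∀ m n : ℤ, d m ∘ₗ d n - d n ∘ₗ d m =
    (((n - m : ℤ) : ℂ)) • d (m + n) +
      (if m + n = 0 then (((n : ℂ) ^ 3 - (n : ℂ)) / 12) else 0) • z
  comm_z : ∀ m : ℤ, d m ∘ₗ z = z ∘ₗ d m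

open Polynomial

section ExponentialPolynomials

/-- The shift operator `f ↦ f (· + 1)` on complex functions on `ℤ`. -/
def intShift : Module.End ℂ (ℤ → ℂ) where
  toFun f k := f (k + 1)
  map_add' _ _ := rfl
  map_smul' _ _ := rfl

lemma pow_mul_zpow_mem_maxGenEigenspace {μ : ℂ} (hμ : μ ≠ 0) (i : ℕ) :
    (fun k : ℤ => (k : ℂ) ^ i * μ ^ k) ∈ intShift.maxGenEigenspace μ := by
  induction i using Nat.strong_induction_on with
  | _ i ih =>
    have hstep : (intShift - algebraMap ℂ _ μ) (fun k : ℤ => (k : ℂ) ^ i * μ ^ k) ∈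
        intShift.maxGenEigenspace μ := by
      have heq : (intShift - algebraMap ℂ _ μ) (fun k : ℤ => (k : ℂ) ^ i * μ ^ k) =
          ∑ j ∈ Finset.range i, (μ * (i.choose j : ℂ)) • fun k : ℤ => (k : ℂ) ^ j * μ ^ k := by
        funext k
        simp only [LinearMap.sub_apply, Module.algebraMap_end_apply, Pi.sub_apply, Pi.smul_apply,
          Finset.sum_apply, smul_eq_mul, intShift, LinearMap.coe_mk, AddHom.coe_mk]
        push_cast
        rw [zpow_add_one₀ hμ, add_pow, Finset.sum_range_succ]
        simp only [one_pow, mul_one, Nat.choose_self, Nat.cast_one, add_mul, Finset.sum_mul]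
        rw [add_sub_assoc, show (k : ℂ) ^ i * (μ ^ k * μ) - μ * ((k : ℂ) ^ i * μ ^ k) = 0 by ring,
          add_zero]
        exact Finset.sum_congr rfl fun j _ => by ring
      rw [heq]
      exact Submodule.sum_mem _ fun j hj => Submodule.smul_mem _ _ (ih j (Finset.mem_range.mp hj))
    rw [Module.End.mem_maxGenEigenspace] at hstep ⊢
    obtain ⟨n, hn⟩ := hstep
    refine ⟨n + 1, ?_⟩
    rw [pow_succ, Module.End.mul_apply]
    exact hn

lemma eval_mul_zpow_mem_maxGenEigenspace {μ : ℂ} (hμ : μ ≠ 0) (p : ℂ[X]) :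
    (fun k : ℤ => p.eval (k : ℂ) * μ ^ k) ∈ intShift.maxGenEigenspace μ := by
  have heq : (fun k : ℤ => p.eval (k : ℂ) * μ ^ k) =
      ∑ i ∈ Finset.range (p.natDegree + 1), p.coeff i • fun k : ℤ => (k : ℂ) ^ i * μ ^ k := by
    funext k
    simp only [Finset.sum_apply, Pi.smul_apply, smul_eq_mul]
    rw [eval_eq_sum_range, Finset.sum_mul]
    exact Finset.sum_congr rfl fun i _ => by ring
  rw [heq]
  exact Submodule.sum_mem _ fun i _ =>
    Submodule.smul_mem _ _ (pow_mul_zpow_mem_maxGenEigenspace hμ i)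

/-- A complex polynomial that vanishes on an arithmetic progression of step two is zero. -/
lemma eq_zero_of_eval_progression (p : ℂ[X]) (x : ℤ)
    (h : ∀ m : ℤ, p.eval (((x + 2 * m : ℤ)) : ℂ) = 0) : p = 0 := by
  refine p.eq_zero_of_infinite_isRoot (Set.Infinite.mono ?_ (Set.infinite_range_of_injective
    (f := fun m : ℤ => ((x + 2 * m : ℤ) : ℂ)) ?_))
  · rintro _ ⟨m, rfl⟩
    exact h m
  · intro m n hmn
    have := Int.cast_injective (α := ℂ) hmn
    lia

lemma eq_zero_of_eval_mul_zpow {μ : ℂ} (hμ : μ ≠ 0) (p : ℂ[X])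
    (h : (fun k : ℤ => p.eval (k : ℂ) * μ ^ k) = 0) : p = 0 := by
  refine eq_zero_of_eval_progression p 0 fun m => ?_
  simpa [hμ, zpow_ne_zero] using congrFun h (0 + 2 * m)

lemma eval_zero_of_exponential_sum {lam : ℂ} (h0 : lam ≠ 0) (h1 : lam ≠ 1) {p q r : ℂ[X]}
    (h : ∀ k : ℤ, p.eval (k : ℂ) * lam ^ k + q.eval (k : ℂ) * lam⁻¹ ^ k + r.eval (k : ℂ) = 0) :
    (lam = -1 ∧ p + q = 0) ∨ (p = 0 ∧ q = 0) := by
  have hr := eval_mul_zpow_mem_maxGenEigenspace one_ne_zero r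
  have hind := intShift.independent_maxGenEigenspace
  by_cases hm : lam = -1
  · left
    refine ⟨hm, eq_zero_of_eval_mul_zpow h0 _ ?_⟩
    have hpq := eval_mul_zpow_mem_maxGenEigenspace h0 (p + q)
    have hd := hind.pairwiseDisjoint h1
    refine Submodule.disjoint_def.mp hd _ hpq ?_
    have : (fun k : ℤ => (p + q).eval (k : ℂ) * lam ^ k) =
        -(fun k : ℤ => r.eval (k : ℂ) * 1 ^ k) := by
      funext k
      have := h k
      have hinv : lam⁻¹ = lam := by rw [hm]; norm_num
      rw [hinv] at this
      simp only [eval_add, Pi.neg_apply, one_zpow]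
      linear_combination this
    rw [this]
    exact Submodule.neg_mem _ hr
  · right
    have hne : lam ≠ lam⁻¹ := by
      intro he
      have : lam * lam = 1 := by
        nth_rewrite 2 [he]
        exact mul_inv_cancel₀ h0
      rcases mul_self_eq_one_iff.mp this with h | h
      exacts [h1 h, hm h]
    have hinv1 : lam⁻¹ ≠ 1 := by simpa using h1
    have hp := eval_mul_zpow_mem_maxGenEigenspace h0 p
    have hq := eval_mul_zpow_mem_maxGenEigenspace (inv_ne_zero h0) q
    have hpz : (fun k : ℤ => p.eval (k : ℂ) * lam ^ k) = 0 := by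
      refine Submodule.disjoint_def.mp (hind lam) _ hp ?_
      have : (fun k : ℤ => p.eval (k : ℂ) * lam ^ k) =
          -((fun k : ℤ => q.eval (k : ℂ) * lam⁻¹ ^ k) + fun k : ℤ => r.eval (k : ℂ) * 1 ^ k) := by
        funext k
        simp only [Pi.neg_apply, Pi.add_apply, one_zpow]
        linear_combination h k
      rw [this]
      refine Submodule.neg_mem _ (Submodule.add_mem _ ?_ ?_)
      · exact Submodule.mem_iSup_of_mem lam⁻¹ (Submodule.mem_iSup_of_mem hne.symm hq)
      · exact Submodule.mem_iSup_of_mem 1 (Submodule.mem_iSup_of_mem h1.symm hr)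
    refine ⟨eq_zero_of_eval_mul_zpow h0 _ hpz,
      eq_zero_of_eval_mul_zpow (inv_ne_zero h0) _ ?_⟩
    refine Submodule.disjoint_def.mp (hind.pairwiseDisjoint hinv1) _ hq ?_
    have : (fun k : ℤ => q.eval (k : ℂ) * lam⁻¹ ^ k) =
        -(fun k : ℤ => r.eval (k : ℂ) * 1 ^ k) := by
      funext k
      have h2 := congrFun hpz k
      simp only [Pi.neg_apply, one_zpow, Pi.zero_apply] at h2 ⊢
      linear_combination h k - h2
    rw [this]
    exact Submodule.neg_mem _ hr

end ExponentialPolynomials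

section PolynomialFunctions

variable {W : Type*} [AddCommGroup W] [Module ℂ W]

/-- A vector-valued function on `ℤ` that becomes polynomial after applying any functional. -/
def IsPolyFn (f : ℤ → W) : Prop :=
  ∀ φ : Module.Dual ℂ W, ∃ p : ℂ[X], ∀ k : ℤ, φ (f k) = p.eval (k : ℂ)

namespace IsPolyFn

lemma const (w : W) : IsPolyFn fun _ => w := fun φ => ⟨C (φ w), by simp⟩

lemma sub {f g : ℤ → W} (hf : IsPolyFn f) (hg : IsPolyFn g) : IsPolyFn fun k => f k - g k := by
  intro φ
  obtain ⟨p, hp⟩ := hf φ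
  obtain ⟨q, hq⟩ := hg φ
  exact ⟨p - q, fun k => by simp [hp, hq]⟩

lemma sum {ι : Type*} (s : Finset ι) {f : ι → ℤ → W} (hf : ∀ i, IsPolyFn (f i)) :
    IsPolyFn fun k => ∑ i ∈ s, f i k := by
  intro φ
  choose p hp using fun i => hf i φ
  exact ⟨∑ i ∈ s, p i, fun k => by simp [hp, eval_finsetSum]⟩

lemma eval_smul (c : ℂ[X]) {f : ℤ → W} (hf : IsPolyFn f) :
    IsPolyFn fun k => c.eval (k : ℂ) • f k := by
  intro φ
  obtain ⟨p, hp⟩ := hf φ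
  exact ⟨c * p, fun k => by simp [hp]⟩

lemma map (T : W →ₗ[ℂ] W) {f : ℤ → W} (hf : IsPolyFn f) : IsPolyFn fun k => T (f k) :=
  fun φ => hf (φ ∘ₗ T)

lemma comp_sub (s : ℤ) {f : ℤ → W} (hf : IsPolyFn f) : IsPolyFn fun k => f (s - k) := by
  intro φ
  obtain ⟨p, hp⟩ := hf φ
  exact ⟨p.comp (C (s : ℂ) - X), fun k => by simp [hp]⟩

end IsPolyFn

end PolynomialFunctions

namespace WittRep

variable {W : Type*} [AddCommGroup W] [Module ℂ W] (ρ : WittRep W)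

lemma d_comm_apply {m n : ℤ} (hm : -1 ≤ m) (hn : -1 ≤ n) (w : W) :
    ρ.d m (ρ.d n w) = ρ.d n (ρ.d m w) + ((n - m : ℤ) : ℂ) • ρ.d (m + n) w := by
  have h := LinearMap.congr_fun (ρ.comm m n hm hn) w
  simp only [LinearMap.sub_apply, LinearMap.comp_apply, LinearMap.smul_apply] at h
  rw [← h]
  abel

/-! ### The operators `e^{kt} d/dt` -/

variable {ρ}

lemma InO.exists_bound (hO : ρ.InO) (w : W) :
    ∃ N : ℕ, ∀ i : ℕ, N ≤ i → ρ.d ((i : ℤ) - 1) w = 0 := by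
  obtain ⟨n, hn⟩ := hO w
  exact ⟨n + 1, fun i hi => hn _ (by lia)⟩

lemma E_eq_sum (k : ℤ) {w : W} {N : ℕ} (h : ∀ i : ℕ, N ≤ i → ρ.d ((i : ℤ) - 1) w = 0) :
    ρ.E k w = ∑ i ∈ Finset.range N,
      (((k : ℂ) ^ i) / (Nat.factorial i : ℂ)) • ρ.d ((i : ℤ) - 1) w := by
  refine finsum_eq_sum_of_support_subset _ fun i hi => ?_
  by_contra hlt
  simp only [Finset.coe_range, Set.mem_Iio, not_lt] at hlt
  exact hi (by simp [h i hlt])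

lemma E_add (hO : ρ.InO) (k : ℤ) (v w : W) : ρ.E k (v + w) = ρ.E k v + ρ.E k w := by
  obtain ⟨m, hm⟩ := hO.exists_bound v
  obtain ⟨n, hn⟩ := hO.exists_bound w
  rw [E_eq_sum (N := max m n) k fun i hi => hm i (le_trans (le_max_left _ _) hi),
    E_eq_sum (N := max m n) k fun i hi => hn i (le_trans (le_max_right _ _) hi),
    E_eq_sum (N := max m n) k fun i hi => by
      rw [map_add, hm i (le_trans (le_max_left _ _) hi), hn i (le_trans (le_max_right _ _) hi),
        add_zero], ← Finset.sum_add_distrib]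
  simp

lemma E_smul (hO : ρ.InO) (k : ℤ) (c : ℂ) (w : W) : ρ.E k (c • w) = c • ρ.E k w := by
  obtain ⟨n, hn⟩ := hO.exists_bound w
  rw [E_eq_sum (N := n) k hn, E_eq_sum (N := n) k fun i hi => by rw [map_smul, hn i hi, smul_zero],
    Finset.smul_sum]
  exact Finset.sum_congr rfl fun i _ => by rw [map_smul, smul_comm]

/-- The operator `e^{kt} d/dt` as a linear map. -/
noncomputable def ELin (hO : ρ.InO) (k : ℤ) : W →ₗ[ℂ] W where
  toFun := ρ.E k
  map_add' := E_add hO k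
  map_smul' := E_smul hO k

lemma E_zero_left (w : W) : ρ.E 0 w = ρ.d (-1) w := by
  refine (finsum_eq_single _ 0 fun i hi => ?_).trans (by simp)
  simp [hi]

lemma E_d_neg_one (hO : ρ.InO) (k : ℤ) (w : W) :
    ρ.E k (ρ.d (-1) w) = ρ.d (-1) (ρ.E k w) - (k : ℂ) • ρ.E k w := by
  obtain ⟨n, hn⟩ := hO.exists_bound w
  obtain ⟨m, hm⟩ := hO.exists_bound (ρ.d (-1) w)
  have hn' : ∀ i : ℕ, max m n ≤ i → ρ.d ((i : ℤ) - 1) w = 0 := fun i hi => hn i (by lia)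
  have hn'' : ∀ i : ℕ, max m n + 1 ≤ i → ρ.d ((i : ℤ) - 1) w = 0 := fun i hi => hn i (by lia)
  have hm' : ∀ i : ℕ, max m n + 1 ≤ i → ρ.d ((i : ℤ) - 1) (ρ.d (-1) w) = 0 :=
    fun i hi => hm i (by lia)
  have hk : (k : ℂ) • ρ.E k w = ∑ i ∈ Finset.range (max m n + 1),
      (((k : ℂ) ^ i) / (Nat.factorial i : ℂ)) • (i : ℂ) • ρ.d ((i : ℤ) - 2) w := by
    rw [E_eq_sum k hn', Finset.sum_range_succ', Finset.smul_sum]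
    simp only [CharP.cast_eq_zero, zero_smul, smul_zero, add_zero]
    refine Finset.sum_congr rfl fun i _ => ?_
    rw [smul_smul, smul_smul, show ((i + 1 : ℕ) : ℤ) - 2 = (i : ℤ) - 1 by push_cast; ring]
    congr 1
    have h1 : ((i : ℂ) + 1) ≠ 0 := by exact_mod_cast Nat.succ_ne_zero i
    have h2 : (Nat.factorial i : ℂ) ≠ 0 := by exact_mod_cast Nat.factorial_ne_zero i
    rw [Nat.factorial_succ]
    push_cast
    field_simp
    ring
  rw [hk, E_eq_sum k hn'', E_eq_sum k hm', map_sum, ← Finset.sum_sub_distrib]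
  refine Finset.sum_congr rfl fun i _ => ?_
  rw [map_smul, ← smul_sub, ρ.d_comm_apply (by lia) le_rfl,
    show (i : ℤ) - 1 + -1 = (i : ℤ) - 2 by ring]
  congr 1
  push_cast
  module

lemma isPolyFn_E (hO : ρ.InO) (w : W) : IsPolyFn fun k => ρ.E k w := by
  obtain ⟨n, hn⟩ := hO.exists_bound w
  simp only [E_eq_sum _ hn]
  refine IsPolyFn.sum _ fun i => ?_
  have := (IsPolyFn.const (ρ.d ((i : ℤ) - 1) w)).eval_smul (C ((Nat.factorial i : ℂ)⁻¹) * X ^ i)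
  simpa [div_eq_inv_mul] using this

lemma isPolyFn_E_E (hO : ρ.InO) (s : ℤ) (w : W) :
    IsPolyFn fun k : ℤ => ρ.E (s - k) (ρ.E k w) := by
  obtain ⟨n, hn⟩ := hO.exists_bound w
  have heq : (fun k : ℤ => ρ.E (s - k) (ρ.E k w)) = fun k : ℤ => ∑ i ∈ Finset.range n,
      (((k : ℂ) ^ i) / (Nat.factorial i : ℂ)) • ρ.E (s - k) (ρ.d ((i : ℤ) - 1) w) := by
    funext k
    rw [E_eq_sum k hn]
    change ELin hO (s - k) _ = _
    rw [map_sum]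
    exact Finset.sum_congr rfl fun i _ => map_smul (ELin hO (s - k)) _ _
  rw [heq]
  refine IsPolyFn.sum _ fun i => ?_
  have := ((isPolyFn_E hO (ρ.d ((i : ℤ) - 1) w)).comp_sub s).eval_smul
    (C ((Nat.factorial i : ℂ)⁻¹) * X ^ i)
  simpa [div_eq_inv_mul] using this

/-! ### Graded pieces of submodules of `L(W, λ, a, b)` -/

/-- The homogeneous component of degree `j` of a subspace of `W ⊗ ℂ[t, t⁻¹]`. -/
noncomputable def component (M : Submodule ℂ (ℤ →₀ W)) (j : ℤ) : Submodule ℂ W :=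
  M.comap (Finsupp.lsingle j)

lemma Lact_single (hO : ρ.InO) (lam a b : ℂ) (k j : ℤ) (w : W) :
    ρ.Lact lam a b k (Finsupp.single j w) = Finsupp.single (k + j)
      (lam ^ k • ρ.E k w - ρ.d (-1) w + (a + (k : ℂ) * b + (j : ℂ)) • w) := by
  refine Finsupp.sum_single_index ?_
  have : ρ.E k 0 = 0 := map_zero (ELin hO k)
  simp [this]

lemma Lact_zero_apply (lam a b : ℂ) (f : ℤ →₀ W) (j : ℤ) :
    ρ.Lact lam a b 0 f j = (a + (j : ℂ)) • f j := by
  unfold Lact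
  simp only [zpow_zero, one_smul, E_zero_left, sub_self, Int.cast_zero, zero_mul, add_zero,
    zero_add, Finsupp.sum, Finsupp.finsetSum_apply, Finsupp.single_apply]
  rw [Finset.sum_ite_eq']
  split_ifs with h
  · rfl
  · simp [Finsupp.notMem_support_iff.mp h]

lemma apply_mem_component {lam a b : ℂ} {M : Submodule ℂ (ℤ →₀ W)}
    (hM : ActInvariant (ρ.Lact lam a b) M) {f : ℤ →₀ W} (hf : f ∈ M) (j : ℤ) :
    f j ∈ component M j := by
  have key : ∀ S : Finset ℤ, ∃ g ∈ M, ∀ i, g i = (∏ s ∈ S, ((i : ℂ) - (s : ℂ))) • f i := by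
    intro S
    induction S using Finset.induction_on with
    | empty => exact ⟨f, hf, by simp⟩
    | insert s S hs ih =>
      obtain ⟨g, hg, hgi⟩ := ih
      refine ⟨ρ.Lact lam a b 0 g - (a + (s : ℂ)) • g,
        M.sub_mem (hM 0 g hg) (M.smul_mem _ hg), fun i => ?_⟩
      rw [Finsupp.sub_apply, Finsupp.smul_apply, Lact_zero_apply, hgi, Finset.prod_insert hs,
        ← sub_smul, smul_smul]
      congr 1
      ring
  obtain ⟨g, hg, hgi⟩ := key (f.support.erase j)
  have hne : ∏ s ∈ f.support.erase j, ((j : ℂ) - (s : ℂ)) ≠ 0 := by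
    refine Finset.prod_ne_zero_iff.mpr fun s hs => sub_ne_zero.mpr ?_
    exact_mod_cast (Finset.ne_of_mem_erase hs).symm
  have hsingle : g = (∏ s ∈ f.support.erase j, ((j : ℂ) - (s : ℂ))) • Finsupp.single j (f j) := by
    ext i
    rw [hgi, Finsupp.smul_apply]
    by_cases hij : i = j
    · subst hij
      simp
    · rw [Finsupp.single_eq_of_ne hij, smul_zero]
      by_cases hi : i ∈ f.support
      · rw [Finset.prod_eq_zero (Finset.mem_erase.mpr ⟨hij, hi⟩) (sub_self (i : ℂ)), zero_smul]
      · rw [Finsupp.notMem_support_iff.mp hi, smul_zero]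
  rw [hsingle] at hg
  exact (M.smul_mem_iff hne).mp hg

lemma Lact_mem_component (hO : ρ.InO) {lam a b : ℂ} {M : Submodule ℂ (ℤ →₀ W)}
    (hM : ActInvariant (ρ.Lact lam a b) M) {j : ℤ} {w : W} (hw : w ∈ component M j) (k : ℤ) :
    lam ^ k • ρ.E k w - ρ.d (-1) w + (a + (k : ℂ) * b + (j : ℂ)) • w ∈ component M (k + j) := by
  have := hM k _ hw
  rwa [Finsupp.lsingle_apply, Lact_single hO] at this

/-- Separating the exponential parts in `k` of `d_{s-k} d_k · (w ⊗ t^j)`. -/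
lemma symmetric_relation (hO : ρ.InO) {lam a b : ℂ} (h0 : lam ≠ 0) (h1 : lam ≠ 1)
    {M : Submodule ℂ (ℤ →₀ W)} (hM : ActInvariant (ρ.Lact lam a b) M) {j : ℤ} {w : W}
    (hw : w ∈ component M j) {l : ℤ} {φ : Module.Dual ℂ W} (hφ : ∀ u ∈ component M l, φ u = 0)
    {x y : ℤ} (hl : x + y + j = l) :
    ((a + l + y * (b - 1)) * φ (ρ.E x w) - φ (ρ.d (-1) (ρ.E x w))) +
      (-1) ^ (x + y) *
        ((a + l + x * (b - 1)) * φ (ρ.E y w) - φ (ρ.d (-1) (ρ.E y w))) = 0 := by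
  obtain ⟨s, hs⟩ : ∃ s, s = x + y := ⟨_, rfl⟩
  have hEs := (isPolyFn_E hO w).comp_sub s
  obtain ⟨p, hp⟩ := (((isPolyFn_E hO w).eval_smul
    (C (a + l + s * (b - 1)) - C (b - 1) * X)).sub ((isPolyFn_E hO w).map (ρ.d (-1)))) φ
  obtain ⟨q, hq⟩ := ((hEs.eval_smul (C (a + l) + C (b - 1) * X)).sub (hEs.map (ρ.d (-1)))) φ
  obtain ⟨r₁, hr₁⟩ := isPolyFn_E_E hO s w φ
  let v : ℤ → W := fun k => (a + (k : ℂ) * b + (j : ℂ)) • w - ρ.d (-1) w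
  have hv : IsPolyFn v := by
    have := ((IsPolyFn.const w).eval_smul (C (a + j) + C b * X)).sub (.const (ρ.d (-1) w))
    convert this using 3 with k
    simp
    ring_nf
  obtain ⟨r₂, hr₂⟩ := ((hv.eval_smul (C (a + s * b + j) - C (b - 1) * X)).sub
    (hv.map (ρ.d (-1)))) φ
  have hrel : ∀ k : ℤ, p.eval (k : ℂ) * lam ^ k + (C (lam ^ s) * q).eval (k : ℂ) * lam⁻¹ ^ k +
      (C (lam ^ s) * r₁ + r₂).eval (k : ℂ) = 0 := by
    intro k
    have hk := hφ _ (by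
      have := Lact_mem_component hO hM (Lact_mem_component hO hM hw k) (s - k)
      rwa [show s - k + (k + j) = l by lia] at this)
    have hvk : lam ^ k • ρ.E k w - ρ.d (-1) w + (a + (k : ℂ) * b + (j : ℂ)) • w =
        lam ^ k • ρ.E k w + v k := by simp only [v]; abel
    have hEv : ρ.E (s - k) (v k) = (a + l + (k : ℂ) * (b - 1)) • ρ.E (s - k) w -
        ρ.d (-1) (ρ.E (s - k) w) := by
      change ELin hO (s - k) _ = _
      simp only [v, map_sub, map_smul]
      change _ • ρ.E (s - k) w - ρ.E (s - k) (ρ.d (-1) w) = _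
      rw [E_d_neg_one hO, ← hl, ← hs]
      push_cast
      module
    have hmul : lam ^ (s - k) * lam ^ k = lam ^ s := by
      rw [← zpow_add₀ h0]; congr 1; ring
    rw [hvk, E_add hO, E_smul hO, hEv] at hk
    have hp' := hp k
    have hq' := hq k
    have hr₁' := hr₁ k
    have hr₂' := hr₂ k
    simp only [map_add, map_sub, map_smul, smul_eq_mul, eval_add, eval_sub, eval_mul, eval_C,
      eval_X] at hk hp' hq' hr₁' hr₂' ⊢
    rw [← hp', ← hq', ← hr₁', ← hr₂', ← hmul]
    have hjl : (j : ℂ) = l - s := by rw [← hl, ← hs]; push_cast; ring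
    push_cast at hk ⊢
    have hcancel : lam ^ k * lam⁻¹ ^ k = 1 := by
      rw [← mul_zpow, mul_inv_cancel₀ h0, one_zpow]
    linear_combination hk + (lam ^ (s - k)) * ((a + l + (b - 1) * k) * φ (ρ.E (s - k) w) -
      φ (ρ.d (-1) (ρ.E (s - k) w))) * hcancel - φ (ρ.E k w) * lam ^ k * hjl
  have hx := hp x
  have hy := hq x
  have hsx : (s : ℂ) = x + y := by rw [hs]; push_cast; ring
  simp only [show s - x = y by lia, map_sub, map_smul, smul_eq_mul, eval_add, eval_sub, eval_mul, eval_C, eval_X,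
    hsx] at hx hy
  have hfin : p.eval (x : ℂ) + (-1) ^ s * q.eval (x : ℂ) = 0 := by
    rcases eval_zero_of_exponential_sum h0 h1 hrel with ⟨hm, hpq⟩ | ⟨hp0, hq0⟩
    · rw [hm] at hpq
      simpa using congrArg (eval (x : ℂ)) hpq
    · have hls : lam ^ s ≠ 0 := zpow_ne_zero _ h0
      have : q = 0 := by simpa [hls] using hq0
      simp [hp0, this]
  rw [← hx, ← hy] at hfin
  rw [← hs]
  linear_combination hfin

end WittRep

lemma mem_of_forall_dual {W : Type*} [AddCommGroup W] [Module ℂ W] {U : Submodule ℂ W} {w : W}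
    (h : ∀ φ : Module.Dual ℂ W, (∀ u ∈ U, φ u = 0) → φ w = 0) : w ∈ U := by
  by_contra hw
  obtain ⟨φ, hφ, hU⟩ := Submodule.exists_le_ker_of_notMem hw
  exact hφ (h φ fun u hu => hU hu)

lemma coeff_comp_C_sub_X {p : ℂ[X]} {m : ℕ} (hp : p.natDegree ≤ m) (s : ℂ) :
    (p.comp (C s - X)).coeff m = (-1) ^ m * p.coeff m := by
  have hdeg : (C s - X : ℂ[X]).natDegree = 1 := by
    rw [← natDegree_neg, neg_sub, natDegree_X_sub_C]
  have hlead : (C s - X : ℂ[X]).leadingCoeff = -1 := by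
    rw [← neg_sub, leadingCoeff_neg, leadingCoeff_X_sub_C]
  rcases hp.lt_or_eq with hlt | rfl
  · rw [coeff_eq_zero_of_natDegree_lt hlt, coeff_eq_zero_of_natDegree_lt, mul_zero]
    rwa [natDegree_comp, hdeg, mul_one]
  · have := coeff_comp_degree_mul_degree (p := p) (q := C s - X) (by rw [hdeg]; exact one_ne_zero)
    rwa [hdeg, mul_one, hlead, mul_comm] at this

namespace WittRep

variable {W : Type*} [AddCommGroup W] [Module ℂ W] {ρ : WittRep W}

lemma exists_symbol (hO : ρ.InO) (φ : Module.Dual ℂ W) (w : W) :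
    ∃ e : ℂ[X], (∀ k : ℤ, φ (ρ.E k w) = e.eval (k : ℂ)) ∧
      ∀ i : ℕ, e.coeff i = φ (ρ.d ((i : ℤ) - 1) w) / (Nat.factorial i : ℂ) := by
  obtain ⟨n, hn⟩ := hO.exists_bound w
  refine ⟨∑ i ∈ Finset.range n, monomial i (φ (ρ.d ((i : ℤ) - 1) w) / (Nat.factorial i : ℂ)),
    fun k => ?_, fun i => ?_⟩
  · rw [E_eq_sum k hn, map_sum, eval_finsetSum]
    refine Finset.sum_congr rfl fun i _ => ?_
    rw [map_smul, eval_monomial, smul_eq_mul]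
    ring
  · simp only [finsetSum_coeff, coeff_monomial, Finset.sum_ite_eq', Finset.mem_range]
    split_ifs with h
    · rfl
    · rw [hn i (not_lt.mp h), map_zero, zero_div]

section Simplicity

variable {lam a b : ℂ} {M : Submodule ℂ (ℤ →₀ W)}

/-- The last nonzero `d_{m-1} w` spreads to all components of one parity. -/
lemma d_top_mem_component (hO : ρ.InO) (h0 : lam ≠ 0) (h1 : lam ≠ 1) (hb : b ≠ 1)
    (hM : ActInvariant (ρ.Lact lam a b) M) {j : ℤ} {w : W} (hw : w ∈ component M j) {m : ℕ}
    (hm : ∀ i : ℕ, m < i → ρ.d ((i : ℤ) - 1) w = 0) {s : ℤ} (hs : Odd (s + m)) :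
    ρ.d ((m : ℤ) - 1) w ∈ component M (s + j) := by
  refine mem_of_forall_dual fun φ hφ => ?_
  obtain ⟨e, he, hec⟩ := exists_symbol hO φ w
  have hedeg : e.natDegree ≤ m := by
    refine natDegree_le_iff_coeff_eq_zero.mpr fun i hi => ?_
    rw [hec, hm i hi, map_zero, zero_div]
  obtain ⟨g, hg, hgdeg⟩ : ∃ g : ℂ[X], (∀ k : ℤ, φ (ρ.d (-1) (ρ.E k w)) = g.eval (k : ℂ)) ∧
      g.natDegree ≤ m := by
    refine ⟨∑ i ∈ Finset.range (m + 1),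
      monomial i (φ (ρ.d (-1) (ρ.d ((i : ℤ) - 1) w)) / (Nat.factorial i : ℂ)), fun k => ?_, ?_⟩
    · rw [E_eq_sum k (N := m + 1) fun i hi => hm i hi, map_sum, map_sum, eval_finsetSum]
      refine Finset.sum_congr rfl fun i _ => ?_
      rw [map_smul, map_smul, eval_monomial, smul_eq_mul]
      ring
    · exact natDegree_sum_le_of_forall_le _ _ fun i hi =>
        (natDegree_monomial_le _).trans (Nat.lt_succ_iff.mp (Finset.mem_range.mp hi))
  set c : ℂ := a + ((s + j : ℤ) : ℂ) with hc
  have hzero : (C (c + s * (b - 1)) * e - C (b - 1) * (X * e) - g) +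
      C ((-1) ^ s) * (C c * e.comp (C (s : ℂ) - X) + C (b - 1) * (X * e.comp (C (s : ℂ) - X)) -
        g.comp (C (s : ℂ) - X)) = 0 := by
    refine eq_zero_of_eval_progression _ 0 fun k => ?_
    generalize 0 + 2 * k = x
    have hrel := symmetric_relation hO h0 h1 hM hw hφ (x := x) (y := s - x) (by ring)
    rw [he, he, hg, hg, ← hc, show x + (s - x) = s by ring] at hrel
    simp only [eval_add, eval_sub, eval_mul, eval_C, eval_X, eval_comp]
    push_cast at hrel ⊢
    linear_combination hrel
  have hdegs : ∀ p : ℂ[X], p.natDegree ≤ m → (p.comp (C (s : ℂ) - X)).natDegree ≤ m := by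
    intro p hp
    rwa [natDegree_comp, ← natDegree_neg (C (s : ℂ) - X), neg_sub, natDegree_X_sub_C, mul_one]
  have htop : ∀ p : ℂ[X], p.natDegree ≤ m → p.coeff (m + 1) = 0 :=
    fun p hp => coeff_eq_zero_of_natDegree_lt (Nat.lt_succ_of_le hp)
  have hco := congrArg (fun p => coeff p (m + 1)) hzero
  simp only [coeff_add, coeff_sub, coeff_C_mul, coeff_X_mul, coeff_zero, htop _ hedeg,
    htop _ hgdeg, htop _ (hdegs _ hedeg), htop _ (hdegs _ hgdeg),
    coeff_comp_C_sub_X hedeg] at hco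
  have hsign : ((-1 : ℂ) ^ s) * (-1) ^ m = -1 := by
    rw [← zpow_natCast, ← zpow_add₀ (by norm_num), hs.neg_one_zpow]
  have hem : e.coeff m = 0 := by
    have : (b - 1) * e.coeff m = 0 := by
      linear_combination (-1 / 2) * hco + (b - 1) * e.coeff m / 2 * hsign
    exact (mul_eq_zero.mp this).resolve_left (sub_ne_zero.mpr hb)
  rw [hec, div_eq_zero_iff] at hem
  exact hem.resolve_right (by exact_mod_cast Nat.factorial_ne_zero m)

/-- Coefficient extraction for vectors lying in all components of one parity. -/
lemma coeff_relations (hO : ρ.InO) (h0 : lam ≠ 0) (h1 : lam ≠ 1) (hb : b ≠ 1)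
    (hM : ActInvariant (ρ.Lact lam a b) M) {w : W} {l ε : ℤ}
    (hw : ∀ m : ℤ, w ∈ component M (ε + 2 * m)) {φ : Module.Dual ℂ W}
    (hφ : ∀ u ∈ component M l, φ u = 0) :
    (∀ i : ℕ, 2 ≤ i → φ (ρ.d ((i : ℤ) - 1) w) = 0) ∧
      ∀ x : ℤ, (b - 1) * φ (ρ.E x w) + (-1) ^ (l - ε) *
        ((a + l + x * (b - 1)) * φ (ρ.d 0 w) - φ (ρ.d (-1) (ρ.d 0 w))) = 0 := by
  obtain ⟨e, he, hec⟩ := exists_symbol hO φ w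
  obtain ⟨n, hn⟩ := hO.exists_bound w
  obtain ⟨g, hg, hgc⟩ : ∃ g : ℂ[X], (∀ k : ℤ, φ (ρ.d (-1) (ρ.E k w)) = g.eval (k : ℂ)) ∧
      g.coeff 1 = φ (ρ.d (-1) (ρ.d 0 w)) := by
    refine ⟨∑ i ∈ Finset.range n,
      monomial i (φ (ρ.d (-1) (ρ.d ((i : ℤ) - 1) w)) / (Nat.factorial i : ℂ)), fun k => ?_, ?_⟩
    · rw [E_eq_sum k hn, map_sum, map_sum, eval_finsetSum]
      refine Finset.sum_congr rfl fun i _ => ?_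
      rw [map_smul, map_smul, eval_monomial, smul_eq_mul]
      ring
    · simp only [finsetSum_coeff, coeff_monomial, Finset.sum_ite_eq', Finset.mem_range]
      split_ifs with h
      · simp
      · have := hn 1 (not_lt.mp h)
        simp only [Nat.cast_one, sub_self] at this
        simp [this]
  have hzero : ∀ x : ℤ, C ((a + l) * e.eval (x : ℂ) - g.eval (x : ℂ)) +
      C ((b - 1) * e.eval (x : ℂ)) * X +
      C ((-1) ^ (l - ε)) * (C (a + l + x * (b - 1)) * e - g) = 0 := by
    intro x
    refine eq_zero_of_eval_progression _ (l - ε - x) fun m => ?_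
    have hrel := symmetric_relation hO h0 h1 hM (hw (-m)) hφ (x := x)
      (y := l - ε - x + 2 * m) (by ring)
    rw [he, he, hg, hg, show x + (l - ε - x + 2 * m) = l - ε + 2 * m by ring,
      zpow_add₀ (by norm_num), (even_two_mul m).neg_one_zpow, mul_one] at hrel
    simp only [eval_add, eval_sub, eval_mul, eval_C, eval_X]
    linear_combination hrel
  have hsign : ((-1 : ℂ) ^ (l - ε)) ≠ 0 := zpow_ne_zero _ (by norm_num)
  refine ⟨fun i hi => ?_, fun x => ?_⟩
  · have hcoeff : ∀ x : ℤ, (a + l + x * (b - 1)) * e.coeff i - g.coeff i = 0 := by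
      intro x
      have hco := congrArg (fun p => coeff p i) (hzero x)
      simp only [coeff_add, coeff_sub, coeff_C_mul, coeff_zero, coeff_C, coeff_X,
        if_neg (show i ≠ 0 by lia), if_neg (show (1 : ℕ) ≠ i by lia), mul_zero, zero_add] at hco
      exact (mul_eq_zero.mp hco).resolve_left hsign
    have hei : (b - 1) * e.coeff i = 0 := by
      have hc0 := hcoeff 0
      have hc1 := hcoeff 1
      push_cast at hc0 hc1
      linear_combination hc1 - hc0
    have := (mul_eq_zero.mp hei).resolve_left (sub_ne_zero.mpr hb)
    rw [hec, div_eq_zero_iff] at this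
    exact this.resolve_right (by exact_mod_cast Nat.factorial_ne_zero i)
  · have hco := congrArg (fun p => coeff p 1) (hzero x)
    have he1 : e.coeff 1 = φ (ρ.d 0 w) := by simp [hec]
    simp only [coeff_add, coeff_sub, coeff_C_mul, coeff_zero, coeff_C, coeff_X, he1, hgc] at hco
    rw [he]
    simpa using hco

lemma d_mem_component_of_parity (hO : ρ.InO) (h0 : lam ≠ 0) (h1 : lam ≠ 1) (hb : b ≠ 1)
    (hM : ActInvariant (ρ.Lact lam a b) M) {w : W} {ε : ℤ}
    (hw : ∀ m : ℤ, w ∈ component M (ε + 2 * m)) {i : ℤ} (hi : 1 ≤ i) (l : ℤ) :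
    ρ.d i w ∈ component M l := by
  refine mem_of_forall_dual fun φ hφ => ?_
  have := (coeff_relations hO h0 h1 hb hM hw hφ).1 (i + 1).toNat (by lia)
  rwa [show (((i + 1).toNat : ℕ) : ℤ) - 1 = i by lia] at this

lemma d_mem_component_of_forall (hO : ρ.InO) (h0 : lam ≠ 0) (h1 : lam ≠ 1) (hb : b ≠ 1)
    (hM : ActInvariant (ρ.Lact lam a b) M) {w : W} (hw : ∀ m : ℤ, w ∈ component M m)
    {i : ℤ} (hi : -1 ≤ i) (l : ℤ) : ρ.d i w ∈ component M l := by
  refine mem_of_forall_dual fun φ hφ => ?_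
  have hE : ∀ x : ℤ, φ (ρ.E x w) = 0 := by
    intro x
    have heven := (coeff_relations hO h0 h1 hb hM (l := l) (ε := l) (fun _ => hw _) hφ).2 x
    have hodd := (coeff_relations hO h0 h1 hb hM (l := l) (ε := l + 1) (fun _ => hw _) hφ).2 x
    rw [sub_self, zpow_zero] at heven
    rw [show l - (l + 1) = -1 by ring] at hodd
    norm_num at hodd
    have : (b - 1) * φ (ρ.E x w) = 0 := by linear_combination (heven + hodd) / 2
    exact (mul_eq_zero.mp this).resolve_left (sub_ne_zero.mpr hb)
  obtain ⟨e, he, hec⟩ := exists_symbol hO φ w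
  have he0 : e = 0 := eq_zero_of_eval_progression _ 0 fun m => by rw [← he, hE]
  have := hec (i + 1).toNat
  rw [he0, coeff_zero, eq_comm, div_eq_zero_iff,
    show (((i + 1).toNat : ℕ) : ℤ) - 1 = i by lia] at this
  exact this.resolve_right (by exact_mod_cast Nat.factorial_ne_zero _)

theorem actSimple_Lact (hO : ρ.InO) (hs : ρ.IsSimple) (h0 : lam ≠ 0) (h1 : lam ≠ 1) (hb : b ≠ 1)
    (hpos : ∀ w : W, (∀ i : ℤ, 1 ≤ i → ρ.d i w = 0) → w = 0) :
    ActSimple (ρ.Lact lam a b) := by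
  obtain ⟨⟨v, hv⟩, hsub⟩ := hs
  refine ⟨⟨Finsupp.single 0 v, by simpa using hv⟩, fun M hM => ?_⟩
  by_cases hbot : M = ⊥
  · exact Or.inl hbot
  right
  obtain ⟨f, hf, hf0⟩ := M.ne_bot_iff.mp hbot
  obtain ⟨j, hj⟩ := Finsupp.ne_iff.mp hf0
  have hw := apply_mem_component hM hf j
  obtain ⟨u, hu0, ε, huM⟩ : ∃ u : W, u ≠ 0 ∧ ∃ ε : ℤ, ∀ m : ℤ, u ∈ component M (ε + 2 * m) := by
    obtain ⟨n, hn⟩ := hO.exists_bound (f j)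
    have hex : ∃ i : ℕ, i ≤ n ∧ ρ.d ((i : ℤ) - 1) (f j) ≠ 0 := by
      by_contra! hall
      refine hj (hpos _ fun i hi => ?_)
      rw [show i = ((i + 1).toNat : ℤ) - 1 by lia]
      rcases le_total (i + 1).toNat n with h | h
      exacts [hall _ h, hn _ h]
    obtain ⟨i, hin, hi⟩ := hex
    classical
    have hmax := Nat.findGreatest_spec (P := fun i : ℕ => ρ.d ((i : ℤ) - 1) (f j) ≠ 0) hin hi
    set m := Nat.findGreatest (fun i : ℕ => ρ.d ((i : ℤ) - 1) (f j) ≠ 0) n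
    refine ⟨_, hmax, m + 1 + j, fun q => ?_⟩
    rw [show (m : ℤ) + 1 + j + 2 * q = (m + 1 + 2 * q) + j by ring]
    refine d_top_mem_component hO h0 h1 hb hM hw (fun i hi => ?_) ⟨m + q, by ring⟩
    rcases le_total i n with h | h
    · exact not_not.mp (Nat.findGreatest_is_greatest hi h)
    · exact hn i h
  have htop : (⨅ l, component M l) = ⊤ := by
    refine (hsub _ fun i hi w hw => ?_).resolve_left fun hbot' => ?_
    · rw [Submodule.mem_iInf] at hw ⊢
      exact fun l => d_mem_component_of_forall hO h0 h1 hb hM hw hi l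
    · refine hu0 (hpos u fun i hi => ?_)
      rw [← Submodule.mem_bot ℂ, ← hbot', Submodule.mem_iInf]
      exact fun l => d_mem_component_of_parity hO h0 h1 hb hM huM hi l
  rw [eq_top_iff]
  intro g _
  rw [← Finsupp.sum_single g]
  refine M.sum_mem fun l _ => ?_
  have : g l ∈ ⨅ l, component M l := htop ▸ Submodule.mem_top
  exact (Submodule.mem_iInf _).mp this l

end Simplicity

end WittRep

/-- A subspace stable under `f` is stable under every polynomial in `f`. -/
lemma aeval_apply_mem_of_stable {W : Type*} [AddCommGroup W] [Module ℂ W] {f : Module.End ℂ W}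
    {B : Submodule ℂ W} (hB : ∀ x ∈ B, f x ∈ B) (p : ℂ[X]) {x : W} (hx : x ∈ B) :
    aeval f p x ∈ B := by
  have hpow : ∀ n : ℕ, (f ^ n) x ∈ B := fun n => by
    induction n with
    | zero => simpa using hx
    | succ n ih => rw [pow_succ', Module.End.mul_apply]; exact hB _ ih
  rw [aeval_eq_sum_range, LinearMap.sum_apply]
  exact B.sum_mem fun i _ => B.smul_mem _ (hpow i)

/-- If `f` has no eigenvector in an `f`-stable subspace, then no nonzero polynomial in `f` kills a
nonzero vector of that subspace. -/
lemma eq_zero_of_aeval_apply_eq_zero {W : Type*} [AddCommGroup W] [Module ℂ W]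
    {f : Module.End ℂ W} {B : Submodule ℂ W} (hB : ∀ x ∈ B, f x ∈ B)
    (heig : ∀ x ∈ B, ∀ c : ℂ, f x = c • x → x = 0) {q : ℂ[X]} (hq : q ≠ 0) {x : W} (hx : x ∈ B)
    (h : aeval f q x = 0) : x = 0 := by
  obtain ⟨n, hn⟩ : ∃ n, q.natDegree = n := ⟨_, rfl⟩
  induction n generalizing q with
  | zero =>
    obtain ⟨c, rfl⟩ := natDegree_eq_zero.mp hn
    rw [aeval_C, Module.algebraMap_end_apply] at h
    exact (smul_eq_zero.mp h).resolve_left fun hc => hq (by rw [hc, C_0])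
  | succ n ih =>
    obtain ⟨c, hc⟩ := IsAlgClosed.exists_root q
      (by rw [degree_eq_natDegree hq, hn]; exact_mod_cast n.succ_ne_zero)
    obtain ⟨p, rfl⟩ := dvd_iff_isRoot.mpr hc
    have hp : p ≠ 0 := right_ne_zero_of_mul hq
    refine ih hp ?_ ?_
    · refine heig _ (aeval_apply_mem_of_stable hB p hx) c ?_
      simpa [sub_eq_zero] using h
    · rw [natDegree_mul (X_sub_C_ne_zero c) hp, natDegree_X_sub_C] at hn
      lia

namespace WittRep

variable {W : Type*} [AddCommGroup W] [Module ℂ W] (ρ : WittRep W)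

/-- The filtration `Σ_{i < n} d_{-1}^i B`. -/
def tower (B : Submodule ℂ W) : ℕ → Submodule ℂ W
  | 0 => ⊥
  | n + 1 => tower B n ⊔ B.map (ρ.d (-1) ^ n)

/-- The sum of the spaces `d_{-1}^i B` is direct and `d_{-1}` acts freely on it. -/
def TowerFree (B : Submodule ℂ W) : Prop :=
  ∀ n : ℕ, ∀ u ∈ B, (ρ.d (-1) ^ n) u ∈ ρ.tower B n → u = 0

variable {ρ} {B : Submodule ℂ W}

lemma tower_monotone : Monotone (ρ.tower B) := monotone_nat_of_le_succ fun _ => le_sup_left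

lemma tower_mono_left {B' : Submodule ℂ W} (h : B' ≤ B) (n : ℕ) :
    ρ.tower B' n ≤ ρ.tower B n := by
  induction n with
  | zero => exact le_rfl
  | succ n ih => exact sup_le_sup ih (Submodule.map_mono h)

lemma pow_mem_tower {u : W} (hu : u ∈ B) (n : ℕ) : (ρ.d (-1) ^ n) u ∈ ρ.tower B (n + 1) :=
  Submodule.mem_sup_right (Submodule.mem_map_of_mem hu)

lemma mem_tower_one {u : W} : u ∈ ρ.tower B 1 ↔ u ∈ B := by
  simp [tower, Module.End.one_eq_id]

lemma mem_tower_succ {n : ℕ} {x : W} :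
    x ∈ ρ.tower B (n + 1) ↔ ∃ g ∈ ρ.tower B n, ∃ u ∈ B, g + (ρ.d (-1) ^ n) u = x := by
  simp [tower, Submodule.mem_sup]

lemma pow_succ_d_apply (n : ℕ) (u : W) :
    (ρ.d (-1) ^ (n + 1)) u = ρ.d (-1) ((ρ.d (-1) ^ n) u) := by
  rw [pow_succ', Module.End.mul_apply]

lemma d_neg_one_mem_tower {n : ℕ} {x : W} (hx : x ∈ ρ.tower B n) :
    ρ.d (-1) x ∈ ρ.tower B (n + 1) := by
  induction n generalizing x with
  | zero =>
    rw [tower, Submodule.mem_bot] at hx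
    simp [hx]
  | succ n ih =>
    obtain ⟨g, hg, u, hu, rfl⟩ := mem_tower_succ.mp hx
    rw [map_add, ← pow_succ_d_apply]
    exact Submodule.add_mem _ (tower_monotone (n + 1).le_succ (ih hg)) (pow_mem_tower hu _)

lemma d_pow_mem_tower (hB : ρ.BInvariant B) {i : ℤ} (hi : 0 ≤ i) (n : ℕ) {u : W} (hu : u ∈ B) :
    ρ.d i ((ρ.d (-1) ^ n) u) ∈ ρ.tower B (n + 1) := by
  induction n generalizing i with
  | zero => exact mem_tower_one.mpr (by simpa using hB i hi u hu)
  | succ n ih =>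
    rw [pow_succ_d_apply, ρ.d_comm_apply (by lia) le_rfl]
    refine Submodule.add_mem _ (d_neg_one_mem_tower (ih hi)) (Submodule.smul_mem _ _ ?_)
    rcases hi.eq_or_lt with rfl | hlt
    · rw [zero_add, ← pow_succ_d_apply]
      exact pow_mem_tower hu _
    · exact tower_monotone (n + 1).le_succ (ih (by lia))

lemma d_mem_tower (hB : ρ.BInvariant B) {i : ℤ} (hi : 0 ≤ i) {n : ℕ} {x : W}
    (hx : x ∈ ρ.tower B n) : ρ.d i x ∈ ρ.tower B n := by
  induction n generalizing x with
  | zero =>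
    rw [tower, Submodule.mem_bot] at hx
    simp [hx]
  | succ n ih =>
    obtain ⟨g, hg, u, hu, rfl⟩ := mem_tower_succ.mp hx
    rw [map_add]
    exact Submodule.add_mem _ (tower_monotone n.le_succ (ih hg)) (d_pow_mem_tower hB hi n hu)

lemma exists_mem_tower (hs : ρ.IsSimple) (hB : ρ.BInvariant B) (hne : B ≠ ⊥) (x : W) :
    ∃ n, x ∈ ρ.tower B n := by
  have hmem : ∀ y, y ∈ ⨆ n, ρ.tower B n ↔ ∃ n, y ∈ ρ.tower B n := fun y =>
    Submodule.mem_iSup_of_directed _ tower_monotone.directed_le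
  rw [← hmem]
  have htop : (⨆ n, ρ.tower B n) = ⊤ := by
    refine (hs.2 _ fun i hi u hu => ?_).resolve_left fun hbot => hne ?_
    · rw [hmem] at hu ⊢
      obtain ⟨n, hn⟩ := hu
      rcases hi.eq_or_lt with rfl | hlt
      · exact ⟨n + 1, d_neg_one_mem_tower hn⟩
      · exact ⟨n, d_mem_tower hB (by lia) hn⟩
    · rw [eq_bot_iff, ← hbot]
      exact fun u hu => (hmem u).mpr ⟨1, mem_tower_one.mpr hu⟩
  rw [htop]
  exact Submodule.mem_top

lemma towerFree_of_lowering (T : W →ₗ[ℂ] W) (L : ℕ → W → W) (hT : ∀ u ∈ B, T u = 0)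
    (hL : ∀ n, ∀ u ∈ B, L n u ∈ B) (hinj : ∀ n, ∀ u ∈ B, L n u = 0 → u = 0)
    (hTL : ∀ n, ∀ u ∈ B, T ((ρ.d (-1) ^ (n + 1)) u) - (ρ.d (-1) ^ n) (L n u) ∈ ρ.tower B n) :
    ρ.TowerFree B := by
  have hlow : ∀ n, ∀ x ∈ ρ.tower B (n + 1), T x ∈ ρ.tower B n := by
    intro n
    induction n with
    | zero =>
      intro x hx
      rw [hT x (mem_tower_one.mp hx)]
      exact Submodule.zero_mem _
    | succ n ih =>
      intro x hx
      obtain ⟨g, hg, u, hu, rfl⟩ := mem_tower_succ.mp hx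
      rw [map_add]
      refine Submodule.add_mem _ (tower_monotone n.le_succ (ih g hg)) ?_
      rw [← sub_add_cancel (T ((ρ.d (-1) ^ (n + 1)) u)) ((ρ.d (-1) ^ n) (L n u))]
      exact Submodule.add_mem _ (tower_monotone n.le_succ (hTL n u hu))
        (pow_mem_tower (hL n u hu) n)
  intro n
  induction n with
  | zero =>
    intro u _ h
    simpa [tower] using h
  | succ n ih =>
    intro u hu h
    refine hinj n u hu (ih _ (hL n u hu) ?_)
    have := Submodule.sub_mem _ (hlow n _ h) (hTL n u hu)
    rwa [sub_sub_cancel] at this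

lemma TowerFree.mem_of_mem_tower (hfree : ρ.TowerFree B) {B' : Submodule ℂ W} (hle : B' ≤ B)
    {u : W} (hu : u ∈ B) {n : ℕ} (h : u ∈ ρ.tower B' n) : u ∈ B' := by
  induction n with
  | zero =>
    rw [tower, Submodule.mem_bot] at h
    exact h ▸ Submodule.zero_mem _
  | succ n ih =>
    rcases n.eq_zero_or_pos with rfl | hn
    · exact mem_tower_one.mp h
    · obtain ⟨g, hg, v, hv, hgv⟩ := mem_tower_succ.mp h
      have hv0 : v = 0 := by
        refine hfree n v (hle hv) ?_
        rw [← add_sub_cancel_left g ((ρ.d (-1) ^ n) v), hgv]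
        exact Submodule.sub_mem _ (tower_monotone hn (mem_tower_one.mpr hu))
          (tower_mono_left hle n hg)
      rw [hv0, map_zero, add_zero] at hgv
      exact ih (hgv ▸ hg)

lemma TowerFree.eq_zero_of_d_sub_smul (hfree : ρ.TowerFree B) {u v : W} (hu : u ∈ B) {c : ℂ}
    (h : ρ.d (-1) v - c • v = u) {n : ℕ} (hv : v ∈ ρ.tower B n) : u = 0 := by
  induction n with
  | zero =>
    rw [tower, Submodule.mem_bot] at hv
    rw [← h, hv]
    simp
  | succ n ih =>
    obtain ⟨g, hg, x, hx, hgx⟩ := mem_tower_succ.mp hv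
    have hx0 : x = 0 := by
      refine hfree (n + 1) x hx ?_
      have : (ρ.d (-1) ^ (n + 1)) x = u + c • v - ρ.d (-1) g := by
        rw [← h, pow_succ_d_apply, sub_add_cancel, ← map_sub, ← hgx, add_sub_cancel_left]
      rw [this]
      exact Submodule.sub_mem _ (Submodule.add_mem _
        (tower_monotone (Nat.le_add_left 1 n) (mem_tower_one.mpr hu))
        (Submodule.smul_mem _ _ hv)) (d_neg_one_mem_tower hg)
    rw [hx0, map_zero, add_zero] at hgx
    exact ih (hgx ▸ hg)

/-! ### Vectors killed by `d_i` for all large `i` -/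

variable (ρ) in
/-- The subspace of vectors killed by all `d_i` with `i ≥ n`. -/
def killed (n : ℕ) : Submodule ℂ W where
  carrier := {v | ∀ i : ℤ, (n : ℤ) ≤ i → ρ.d i v = 0}
  add_mem' hv hw i hi := by rw [map_add, hv i hi, hw i hi, add_zero]
  zero_mem' i _ := map_zero _
  smul_mem' c v hv i hi := by rw [map_smul, hv i hi, smul_zero]

lemma killed_bInvariant (n : ℕ) : ρ.BInvariant (ρ.killed n) := by
  intro i hi u hu m hm
  rw [ρ.d_comm_apply (by lia) (by lia), hu m hm, hu (m + i) (by lia)]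
  simp

lemma d_zero_pow (n : ℕ) (u : W) :
    ρ.d 0 ((ρ.d (-1) ^ n) u) = (ρ.d (-1) ^ n) (ρ.d 0 u - (n : ℂ) • u) := by
  induction n with
  | zero => simp
  | succ n ih =>
    rw [pow_succ_d_apply, ρ.d_comm_apply (by lia) le_rfl, ih, zero_add, ← pow_succ_d_apply,
      ← pow_succ_d_apply, ← map_smul, ← map_add]
    congr 1
    push_cast
    module

lemma d_one_pow_succ {u : W} (hu : ρ.d 1 u = 0) (n : ℕ) :
    ρ.d 1 ((ρ.d (-1) ^ (n + 1)) u) =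
      (ρ.d (-1) ^ n) (((n : ℂ) + 1) • ((n : ℂ) • u - (2 : ℂ) • ρ.d 0 u)) := by
  induction n with
  | zero =>
    rw [pow_succ_d_apply, ρ.d_comm_apply (by lia) le_rfl]
    simp [hu]
  | succ n ih =>
    rw [pow_succ_d_apply, ρ.d_comm_apply (by lia) le_rfl, ih, show (1 : ℤ) + -1 = 0 by ring,
      d_zero_pow, ← pow_succ_d_apply, ← map_smul (ρ.d (-1) ^ (n + 1)), ← map_add]
    congr 1
    push_cast
    module

lemma killed_one_eq_bot (hs : ρ.IsSimple) (hnhw : ¬ ∃ (w₀ : W) (c : ℂ), ρ.IsHW w₀ c) :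
    ρ.killed 1 = ⊥ := by
  have heig : ∀ x ∈ ρ.killed 1, ∀ c : ℂ, ρ.d 0 x = c • x → x = 0 := by
    intro x hx c hc
    by_contra hx0
    exact hnhw ⟨x, c, hx0, hc, fun i hi => hx i (by exact_mod_cast hi)⟩
  have hd0 : ∀ x ∈ ρ.killed 1, ρ.d 0 x ∈ ρ.killed 1 := killed_bInvariant 1 0 le_rfl
  have hfree : ρ.TowerFree (ρ.killed 1) := by
    refine towerFree_of_lowering (ρ.d 1)
      (fun n u => ((n : ℂ) + 1) • ((n : ℂ) • u - (2 : ℂ) • ρ.d 0 u)) (fun u hu => hu 1 (by simp))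
      (fun n u hu => Submodule.smul_mem _ _ (Submodule.sub_mem _ (Submodule.smul_mem _ _ hu)
        (Submodule.smul_mem _ _ (hd0 u hu)))) (fun n u hu h => ?_) fun n u hu => ?_
    · have hn : ((n : ℂ) + 1) ≠ 0 := by exact_mod_cast n.succ_ne_zero
      have h2 := sub_eq_zero.mp ((smul_eq_zero.mp h).resolve_left hn)
      refine heig u hu (n / 2) ?_
      rw [div_eq_inv_mul, mul_smul, h2, smul_smul]
      norm_num
    · rw [d_one_pow_succ (hu 1 (by simp)), sub_self]
      exact Submodule.zero_mem _
  rw [eq_bot_iff]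
  intro u hu
  rw [Submodule.mem_bot]
  by_contra hu0
  let B' : Submodule ℂ W :=
    { carrier := {x | ∃ p : ℂ[X], aeval (ρ.d 0) (X * p) u = x}
      add_mem' := by
        rintro _ _ ⟨p, rfl⟩ ⟨q, rfl⟩
        exact ⟨p + q, by rw [mul_add, map_add, LinearMap.add_apply]⟩
      zero_mem' := ⟨0, by simp⟩
      smul_mem' := by
        rintro c _ ⟨p, rfl⟩
        exact ⟨c • p, by rw [mul_smul_comm, map_smul, LinearMap.smul_apply]⟩ }
  have hle : B' ≤ ρ.killed 1 := by
    rintro _ ⟨p, rfl⟩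
    exact aeval_apply_mem_of_stable hd0 _ hu
  have hB' : ρ.BInvariant B' := by
    rintro i hi x hx
    rcases hi.eq_or_lt with rfl | hlt
    · obtain ⟨p, rfl⟩ := hx
      exact ⟨X * p, by simp⟩
    · rw [hle hx i (by exact_mod_cast hlt)]
      exact Submodule.zero_mem _
  have hne : B' ≠ ⊥ := by
    refine (Submodule.ne_bot_iff _).mpr ⟨ρ.d 0 u, ⟨1, by simp⟩, fun h => hu0 ?_⟩
    exact heig u hu 0 (by rw [h, zero_smul])
  obtain ⟨n, hn⟩ := exists_mem_tower hs hB' hne u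
  obtain ⟨p, hp⟩ := hfree.mem_of_mem_tower hle hu hn
  refine hu0 (eq_zero_of_aeval_apply_eq_zero (q := 1 - X * p) hd0 heig ?_ hu ?_)
  · intro h
    simpa using congrArg (fun q => coeff q 0) h
  · rw [map_sub, LinearMap.sub_apply, hp]
    simp

lemma d_pow_sub_mem_tower (hB : ρ.BInvariant B) {i : ℤ} (hi : 1 ≤ i) {u : W} (hu : u ∈ B)
    (n : ℕ) : ρ.d i ((ρ.d (-1) ^ n) u) - (ρ.d (-1) ^ n) (ρ.d i u) ∈ ρ.tower B n := by
  induction n with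
  | zero => simp
  | succ n ih =>
    rw [pow_succ_d_apply, pow_succ_d_apply, ρ.d_comm_apply (by lia) le_rfl, add_sub_right_comm,
      ← map_sub]
    exact Submodule.add_mem _ (d_neg_one_mem_tower ih)
      (Submodule.smul_mem _ _ (d_pow_mem_tower hB (by lia) n hu))

/-- A simple module in `O_𝔚` without highest weight vectors is free over `ℂ[d_{-1}]` on a nonzero
`𝔟`-submodule. -/
lemma exists_towerFree (hO : ρ.InO) (hs : ρ.IsSimple)
    (hnhw : ¬ ∃ (w₀ : W) (c : ℂ), ρ.IsHW w₀ c) :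
    ∃ B : Submodule ℂ W, ρ.BInvariant B ∧ B ≠ ⊥ ∧ ρ.TowerFree B := by
  have hex : ∃ n, ρ.killed n ≠ ⊥ := by
    obtain ⟨v, hv⟩ := hs.1
    obtain ⟨n, hn⟩ := hO v
    exact ⟨n, (Submodule.ne_bot_iff _).mpr ⟨v, hn, hv⟩⟩
  classical
  obtain ⟨n, hn⟩ : ∃ n, Nat.find hex = n := ⟨_, rfl⟩
  have hne : ρ.killed n ≠ ⊥ := hn ▸ Nat.find_spec hex
  have hn2 : 2 ≤ n := by
    by_contra hlt
    refine hne (eq_bot_iff.mpr ?_)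
    rw [← killed_one_eq_bot hs hnhw]
    exact fun v hv i hi => hv i (by push_cast at hi; lia)
  obtain ⟨r, rfl⟩ : ∃ r, n = r + 1 := ⟨n - 1, by lia⟩
  have hbot : ρ.killed r = ⊥ := not_not.mp (Nat.find_min hex (by lia))
  have hB := killed_bInvariant (ρ := ρ) (r + 1)
  have hr2 : ((r : ℂ) + 2) ≠ 0 := by exact_mod_cast (Nat.succ_ne_zero (r + 1))
  refine ⟨ρ.killed (r + 1), hB, hne, towerFree_of_lowering (ρ.d (r + 1))
    (fun m u => -(((m : ℂ) + 1) * ((r : ℂ) + 2)) • ρ.d r u)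
    (fun u hu => hu _ (by push_cast; exact le_rfl))
    (fun m u hu => Submodule.smul_mem _ _ (hB r (by lia) u hu)) (fun m u hu h => ?_)
    fun m u hu => ?_⟩
  · have hm : ((m : ℂ) + 1) ≠ 0 := by exact_mod_cast m.succ_ne_zero
    have hdr := (smul_eq_zero.mp h).resolve_left (neg_ne_zero.mpr (mul_ne_zero hm hr2))
    rw [← Submodule.mem_bot ℂ, ← hbot]
    intro i hi
    rcases hi.eq_or_lt with rfl | hlt
    exacts [hdr, hu i (by push_cast; lia)]
  · induction m with
    | zero =>
      have h0 : ρ.d (r + 1) u = 0 := hu _ (by push_cast; exact le_rfl)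
      rw [pow_succ_d_apply, ρ.d_comm_apply (by lia) le_rfl]
      have : ((-1 - ((r : ℤ) + 1) : ℤ) : ℂ) = -(((0 : ℕ) + 1 : ℂ) * ((r : ℂ) + 2)) := by
        push_cast; ring
      simp only [pow_zero, Module.End.one_apply, h0, map_zero, zero_add, this,
        show (r : ℤ) + 1 + -1 = r by ring, sub_self]
      exact Submodule.zero_mem _
    | succ m ih =>
      have hstep := d_pow_sub_mem_tower hB (i := r) (by lia) hu (m + 1)
      rw [pow_succ_d_apply, ρ.d_comm_apply (by lia) le_rfl, show (r : ℤ) + 1 + -1 = r by ring]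
      have hsum := Submodule.sub_mem _ (d_neg_one_mem_tower ih)
        (Submodule.smul_mem _ ((r : ℂ) + 2) hstep)
      convert hsum using 1
      simp only [map_sub, map_smul, pow_succ_d_apply]
      push_cast
      module

/-! ### Reducibility at `λ = 1` and at `b = 1` -/

lemma gradedSub_invariant {lam a b : ℂ} (U : ℤ → Submodule ℂ W)
    (hU : ∀ (k j : ℤ), ∀ w ∈ U j,
      lam ^ k • ρ.E k w - ρ.d (-1) w + (a + (k : ℂ) * b + (j : ℂ)) • w ∈ U (k + j)) :
    ActInvariant (ρ.Lact lam a b) (gradedSub U) := by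
  intro k f hf
  refine Submodule.sum_mem _ fun j _ => fun i => ?_
  rw [Finsupp.single_apply]
  split_ifs with h
  · exact h ▸ hU k j _ (hf j)
  · exact Submodule.zero_mem _

lemma single_mem_gradedSub_iff {U : ℤ → Submodule ℂ W} {j : ℤ} {w : W} :
    Finsupp.single j w ∈ gradedSub U ↔ w ∈ U j := by
  refine ⟨fun h => by simpa using h j, fun h i => ?_⟩
  rw [Finsupp.single_apply]
  split_ifs with hij
  · exact hij ▸ h
  · exact Submodule.zero_mem _

lemma TowerFree.d_neg_one_notMem (hfree : ρ.TowerFree B) {u : W} (hu : u ∈ B) (hu0 : u ≠ 0) :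
    ρ.d (-1) u ∉ B := fun h => hu0 (hfree 1 u hu (mem_tower_one.mpr (by simpa using h)))

lemma not_actSimple_Lact_one (hO : ρ.InO) (hB : ρ.BInvariant B) (hne : B ≠ ⊥)
    (hfree : ρ.TowerFree B) (a b : ℂ) : ¬ ActSimple (ρ.Lact 1 a b) := by
  obtain ⟨u, hu, hu0⟩ := B.ne_bot_iff.mp hne
  rintro ⟨-, hsimple⟩
  have hinv : ActInvariant (ρ.Lact 1 a b) (gradedSub fun _ => B) := by
    refine gradedSub_invariant _ fun k j w hw => ?_
    refine Submodule.add_mem _ ?_ (Submodule.smul_mem _ _ hw)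
    obtain ⟨n, hn⟩ := hO.exists_bound w
    rw [E_eq_sum (N := n + 1) k fun i hi => hn i (by lia), Finset.sum_range_succ']
    simp only [one_zpow, one_smul, pow_zero, Nat.factorial_zero, Nat.cast_one, div_one,
      Nat.cast_zero, zero_sub, add_sub_cancel_right]
    exact Submodule.sum_mem _ fun i _ =>
      Submodule.smul_mem _ _ (hB _ (by push_cast; lia) w hw)
  rcases hsimple _ hinv with h | h
  · have hmem : Finsupp.single 0 u ∈ gradedSub fun _ : ℤ => B := single_mem_gradedSub_iff.mpr hu
    rw [h, Submodule.mem_bot] at hmem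
    exact hu0 (by simpa using hmem)
  · have hmem : Finsupp.single 0 (ρ.d (-1) u) ∈ gradedSub fun _ : ℤ => B := by
      rw [h]; exact Submodule.mem_top
    exact hfree.d_neg_one_notMem hu hu0 (single_mem_gradedSub_iff.mp hmem)

lemma not_actSimple_Lact_of_b_eq_one (hO : ρ.InO) (hs : ρ.IsSimple) (hB : ρ.BInvariant B)
    (hne : B ≠ ⊥) (hfree : ρ.TowerFree B) (lam a : ℂ) : ¬ ActSimple (ρ.Lact lam a 1) := by
  obtain ⟨u, hu, hu0⟩ := B.ne_bot_iff.mp hne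
  rintro ⟨-, hsimple⟩
  let U : ℤ → Submodule ℂ W := fun j =>
    LinearMap.range (ρ.d (-1) - (a + (j : ℂ)) • LinearMap.id)
  have hinv : ActInvariant (ρ.Lact lam a 1) (gradedSub U) := by
    refine gradedSub_invariant _ fun k j w hw => ?_
    obtain ⟨v, rfl⟩ := hw
    refine ⟨lam ^ k • ρ.E k v - ρ.d (-1) v + (a + (j : ℂ)) • v, ?_⟩
    have hE : ρ.E k (ρ.d (-1) v - (a + (j : ℂ)) • v) =
        ρ.E k (ρ.d (-1) v) - (a + (j : ℂ)) • ρ.E k v :=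
      (map_sub (ELin hO k) _ _).trans (congrArg _ (map_smul (ELin hO k) _ _))
    simp only [LinearMap.sub_apply, LinearMap.smul_apply, LinearMap.id_apply, hE, E_d_neg_one hO,
      map_sub, map_add, map_smul]
    push_cast
    module
  rcases hsimple _ hinv with h | h
  · have hmem : Finsupp.single 0 (ρ.d (-1) u - (a + ((0 : ℤ) : ℂ)) • u) ∈ gradedSub U :=
      single_mem_gradedSub_iff.mpr ⟨u, rfl⟩
    rw [h, Submodule.mem_bot, Finsupp.single_eq_zero, sub_eq_zero] at hmem
    exact hfree.d_neg_one_notMem hu hu0 (hmem ▸ B.smul_mem _ hu)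
  · have hmem : Finsupp.single 0 u ∈ gradedSub U := by
      rw [h]; exact Submodule.mem_top
    obtain ⟨v, hv⟩ := single_mem_gradedSub_iff.mp hmem
    obtain ⟨n, hn⟩ := exists_mem_tower hs hB hne v
    exact hu0 (hfree.eq_zero_of_d_sub_smul hu hv hn)

end WittRep

theorem stmt12 {W : Type*} [AddCommGroup W] [Module ℂ W] (ρ : WittRep W)
    (hO : ρ.InO) (hnt : ¬ ρ.IsTrivial) (hs : ρ.IsSimple)
    (lam a b : ℂ) (hlam : lam ≠ 0)
    (hnhw : ¬ ∃ (w₀ : W) (c : ℂ), ρ.IsHW w₀ c) :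
    ActSimple (ρ.Lact lam a b) ↔ (lam ≠ 1 ∧ b ≠ 1) := by
  obtain ⟨B, hB, hne, hfree⟩ := WittRep.exists_towerFree hO hs hnhw
  refine ⟨fun h => ⟨?_, ?_⟩, fun ⟨h1, hb⟩ => WittRep.actSimple_Lact hO hs hlam h1 hb fun w hw => ?_⟩
  · rintro rfl
    exact WittRep.not_actSimple_Lact_one hO hB hne hfree a b h
  · rintro rfl
    exact WittRep.not_actSimple_Lact_of_b_eq_one hO hs hB hne hfree lam a h
  · rw [← Submodule.mem_bot ℂ, ← WittRep.killed_one_eq_bot hs hnhw]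
    exact fun i hi => hw i (by exact_mod_cast hi)
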